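/- If the theory V ∪ KK is closed generic, then there is at most one propositional atom (i.e., the type of propositional atoms is a subsingleton). -/

import Mathlib

/-!
Fix an atom `a`, and let `T'` be the smallest closed theory containing V, KK and `¬¬a`
(the predicate `DN a` below). Then `T' ⊨ a`, so if V ∪ KK were closed generic, the instance
`K a → K K a` of KK, evaluated in `M_{T',∅}`, would give `T' ⊨ K a`. But knowledge is not closed
under consequence here: the model in which all atoms are true and exactly the members of `T'` and
the valid formulas are known satisfies `T'`, while `a` is neither valid nor a member of `T'`
(`not_entails_K_atom`). Hence V ∪ KK is not closed generic as soon as there is an atom, which is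
more than the theorem asks for.
-/

/-- Formulas of propositional modal logic over atoms `A`. -/
inductive Formula (A : Type) : Type
  | atom : A → Formula A
  | neg : Formula A → Formula A
  | and : Formula A → Formula A → Formula A
  | or : Formula A → Formula A → Formula A
  | imp : Formula A → Formula A → Formula A
  | K : Formula A → Formula A

/-- A model assigns a truth value to each basic formula, i.e. to each
atom and to each formula of the form `K φ`. -/
structure Model (A : Type) where
  atomVal : A → Prop
  kVal : Formula A → Prop

/-- Truth of a formula in a model. -/
def Model.Sat {A : Type} (M : Model A) : Formula A → Prop
  | .atom a => M.atomVal a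
  | .neg φ => ¬ M.Sat φ
  | .and φ ψ => M.Sat φ ∧ M.Sat ψ
  | .or φ ψ => M.Sat φ ∨ M.Sat ψ
  | .imp φ ψ => M.Sat φ → M.Sat ψ
  | .K φ => M.kVal φ

/-- A model satisfies a theory if it satisfies each of its members. -/
def Model.SatTheory {A : Type} (M : Model A) (T : Set (Formula A)) : Prop :=
  ∀ φ ∈ T, M.Sat φ

/-- `T` entails `φ`: every model of `T` satisfies `φ`. -/
def Entails {A : Type} (T : Set (Formula A)) (φ : Formula A) : Prop :=
  ∀ M : Model A, M.SatTheory T → M.Sat φ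

/-- `φ` is valid iff it is entailed by the empty theory. -/
def Valid {A : Type} (φ : Formula A) : Prop := Entails ∅ φ

/-- A theory is closed if it contains `K φ` whenever it contains `φ`. -/
def TheoryClosed {A : Type} (T : Set (Formula A)) : Prop :=
  ∀ φ ∈ T, Formula.K φ ∈ T

/-- A theory is consistent iff some model satisfies it. -/
def Consistent {A : Type} (T : Set (Formula A)) : Prop :=
  ∃ M : Model A, M.SatTheory T

/-- The schema V: `K φ` for every valid `φ`. -/
def schemaV (A : Type) : Set (Formula A) :=
  { χ | ∃ φ, Valid φ ∧ χ = Formula.K φ }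

/-- The schema K: all formulas `K(φ→ψ) → (Kφ → Kψ)`. -/
def schemaK (A : Type) : Set (Formula A) :=
  { χ | ∃ φ ψ, χ = Formula.imp (Formula.K (Formula.imp φ ψ))
      (Formula.imp (Formula.K φ) (Formula.K ψ)) }

/-- The schema T: all formulas `Kφ → φ`. -/
def schemaT (A : Type) : Set (Formula A) :=
  { χ | ∃ φ, χ = Formula.imp (Formula.K φ) φ }

/-- The schema KK (a.k.a. 4): all formulas `Kφ → KKφ`. -/
def schemaKK (A : Type) : Set (Formula A) :=
  { χ | ∃ φ, χ = Formula.imp (Formula.K φ) (Formula.K (Formula.K φ)) }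

/-- `φ ↔ ψ` abbreviates `(φ→ψ) ∧ (ψ→φ)`. -/
def Formula.iffF {A : Type} (φ ψ : Formula A) : Formula A :=
  Formula.and (Formula.imp φ ψ) (Formula.imp ψ φ)

/-- The model `M_{T,S}`: atoms are true iff in `S`; `Kφ` true iff `T ⊨ φ`. -/
def canonModel {A : Type} (T : Set (Formula A)) (S : Set A) : Model A :=
  { atomVal := fun a => a ∈ S, kVal := fun φ => Entails T φ }

/-- `T` is generic iff for every set `S` of atoms and every theory `T' ⊇ T`,
`M_{T',S} ⊨ T`. -/
def Generic {A : Type} (T : Set (Formula A)) : Prop :=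
  ∀ (S : Set A) (T' : Set (Formula A)), T ⊆ T' → (canonModel T' S).SatTheory T

/-- `T` is closed generic iff for every set `S` of atoms and every closed
theory `T' ⊇ T`, `M_{T',S} ⊨ T`. -/
def ClosedGeneric {A : Type} (T : Set (Formula A)) : Prop :=
  ∀ (S : Set A) (T' : Set (Formula A)), TheoryClosed T' → T ⊆ T' →
    (canonModel T' S).SatTheory T

/-- The smallest closed theory containing `X`: the intersection of all
closed theories containing `X`. -/
def closedClosure {A : Type} (X : Set (Formula A)) : Set (Formula A) :=
  ⋂₀ { T | TheoryClosed T ∧ X ⊆ T }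

/-- Membership in the smallest closed theory containing V, KK and `¬¬a`. -/
inductive DN {A : Type} (a : A) : Formula A → Prop
  | valid (φ : Formula A) : Valid φ → DN a (.K φ)
  | kk (φ : Formula A) : DN a (.imp (.K φ) (.K (.K φ)))
  | dn : DN a (.neg (.neg (.atom a)))
  | step (φ : Formula A) : DN a φ → DN a (.K φ)

theorem entails_atom {A : Type} (a : A) : Entails {φ | DN a φ} (.atom a) := by
  intro M hM
  exact not_not.mp (hM _ DN.dn)

theorem not_valid_atom {A : Type} (a : A) : ¬ Valid (.atom a) := by
  intro h
  exact h ⟨fun _ => False, fun _ => False⟩ (fun _ h => h.elim)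

theorem not_entails_K_atom {A : Type} (a : A) : ¬ Entails {φ | DN a φ} (.K (.atom a)) := by
  intro h
  have key : DN a (.atom a) ∨ Valid (.atom a) := by
    refine h ⟨fun _ => True, fun φ => DN a φ ∨ Valid φ⟩ ?_
    intro φ hφ
    cases hφ with
    | valid φ hv => exact Or.inr hv
    | kk φ =>
      intro hk
      exact Or.inl (hk.elim (DN.step φ) (DN.valid φ))
    | dn => exact fun hn => hn trivial
    | step φ hd => exact Or.inl hd
  rcases key with hd | hv
  · cases hd
  · exact not_valid_atom a hv

/-- if V ∪ KK is closed generic, then there is at most one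
propositional atom. -/
theorem statement17 (A : Type) [Nonempty A]
    (h : ClosedGeneric (schemaV A ∪ schemaKK A)) : Subsingleton A := by
  obtain ⟨a⟩ := ‹Nonempty A›
  have hsub : schemaV A ∪ schemaKK A ⊆ {φ | DN a φ} := by
    rintro χ (⟨φ, hv, rfl⟩ | ⟨φ, rfl⟩)
    · exact DN.valid φ hv
    · exact DN.kk φ
  have hkk := h ∅ {φ | DN a φ} DN.step hsub _ (Or.inr ⟨.atom a, rfl⟩)
  exact (not_entails_K_atom a (hkk (entails_atom a))).elim
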